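/- arXiv:2602.13531 — 2 statements merged into one kernel-verified Lean document; each statement's English description precedes it below -/
import Mathlib

section
/- Define μ := λ^w·Δ_w + (1−λ)·λ^i·Δ_i + (1−λ)·Σ_{k=i+1}^{w−1} λ^k·Δ_k. If moreover s > 0 and λ < s/(√2 + s), then ‖μ‖ > 0, i.e., μ ≠ 0. -/
/-!
Split off the first vector: `μ = ((1 - r) * r ^ m) • x m + T`. The weights of the tail `T` telescope
to `r ^ (m + 1)`, so a common bound `b` on the norms of its vectors gives `‖T‖ ≤ r ^ (m + 1) * b`,
while the first term has norm at least `(1 - r) * r ^ m * a` if `a ≤ ‖x m‖`. The first term wins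
when `r * b < (1 - r) * a`, that is, when `r < a / (b + a)`.
-/

section Algebra

variable {R E : Type*} [Ring R] [AddCommGroup E] [Module R E]

/-- The discounted sum of `x m, …, x (n - 1)` with initial state `y`: what these vectors contribute
to the exponential moving average `z ↦ r • z + (1 - r) • x k`, started at `y` and fed with
`x (n - 1), …, x 0` in this order. Discounting starts at index `0`, so for `m ≤ n` the weights have
total mass `r ^ m`, not `1`. -/
def discountedSum (r : R) (y : E) (x : ℕ → E) (m n : ℕ) : E :=
  r ^ n • y + (1 - r) • ∑ k ∈ Finset.Ico m n, r ^ k • x k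

variable (r : R) (y : E) (x : ℕ → E) {m n : ℕ}

theorem discountedSum_eq_smul_add (hmn : m < n) :
    discountedSum r y x m n = ((1 - r) * r ^ m) • x m + discountedSum r y x (m + 1) n := by
  rw [discountedSum, discountedSum, Finset.sum_eq_sum_Ico_succ_bot hmn, smul_add, smul_smul,
    add_left_comm]

theorem discountedSum_eq_add_smul_sum_Icc (hmn : m < n) :
    discountedSum r y x m n = r ^ n • y + ((1 - r) * r ^ m) • x m
      + (1 - r) • ∑ k ∈ Finset.Icc (m + 1) (n - 1), r ^ k • x k := by
  rw [discountedSum_eq_smul_add r y x hmn, discountedSum, add_left_comm, ← add_assoc,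
    Finset.Icc_sub_one_right_eq_Ico_of_not_isMin (not_isMin_of_lt hmn)]

end Algebra

section Norm

variable {E : Type*} [SeminormedAddCommGroup E] [NormedSpace ℝ E]

theorem norm_sum_smul_le_sum_mul {ι : Type*} {s : Finset ι} {c : ι → ℝ} {x : ι → E} {b : ℝ}
    (hc : ∀ k ∈ s, 0 ≤ c k) (hx : ∀ k ∈ s, ‖x k‖ ≤ b) :
    ‖∑ k ∈ s, c k • x k‖ ≤ (∑ k ∈ s, c k) * b := by
  rw [Finset.sum_mul]
  refine norm_sum_le_of_le s fun k hk ↦ ?_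
  rw [norm_smul_of_nonneg (hc k hk)]
  exact mul_le_mul_of_nonneg_left (hx k hk) (hc k hk)

variable {r a b : ℝ} {m n : ℕ} {x : ℕ → E} {y : E}

theorem norm_discountedSum_le (hr₀ : 0 ≤ r) (hr₁ : r ≤ 1) (hmn : m ≤ n)
    (hy : ‖y‖ ≤ b) (hx : ∀ k, m ≤ k → k < n → ‖x k‖ ≤ b) :
    ‖discountedSum r y x m n‖ ≤ r ^ m * b := by
  have h_initial : ‖r ^ n • y‖ ≤ r ^ n * b := by
    rw [norm_smul_of_nonneg (pow_nonneg hr₀ n)]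
    gcongr
  have h_sum : ‖(1 - r) • ∑ k ∈ Finset.Ico m n, r ^ k • x k‖ ≤ (r ^ m - r ^ n) * b := by
    rw [norm_smul_of_nonneg (sub_nonneg.2 hr₁), ← geom_sum_Ico_mul_neg r hmn,
      mul_comm _ (1 - r), mul_assoc]
    refine mul_le_mul_of_nonneg_left
      (norm_sum_smul_le_sum_mul (fun k _ ↦ pow_nonneg hr₀ k) fun k hk ↦ ?_) (sub_nonneg.2 hr₁)
    exact hx k (Finset.mem_Ico.1 hk).1 (Finset.mem_Ico.1 hk).2
  calc
    ‖discountedSum r y x m n‖ ≤ r ^ n * b + (r ^ m - r ^ n) * b :=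
      norm_add_le_of_le h_initial h_sum
    _ = r ^ m * b := by ring

theorem pow_mul_sub_le_norm_discountedSum (hr₀ : 0 ≤ r) (hr₁ : r ≤ 1) (hmn : m < n)
    (hy : ‖y‖ ≤ b) (hx : ∀ k, m < k → k < n → ‖x k‖ ≤ b) (hm : a ≤ ‖x m‖) :
    r ^ m * ((1 - r) * a - r * b) ≤ ‖discountedSum r y x m n‖ := by
  have h_tail : ‖discountedSum r y x (m + 1) n‖ ≤ r ^ (m + 1) * b :=
    norm_discountedSum_le hr₀ hr₁ hmn hy hx
  have h_weight : 0 ≤ (1 - r) * r ^ m := mul_nonneg (sub_nonneg.2 hr₁) (pow_nonneg hr₀ m)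
  have h_first : (1 - r) * r ^ m * a ≤ ‖((1 - r) * r ^ m) • x m‖ := by
    rw [norm_smul_of_nonneg h_weight]
    gcongr
  calc
    r ^ m * ((1 - r) * a - r * b) = (1 - r) * r ^ m * a - r ^ (m + 1) * b := by ring
    _ ≤ ‖((1 - r) * r ^ m) • x m‖ - ‖discountedSum r y x (m + 1) n‖ := sub_le_sub h_first h_tail
    _ ≤ ‖((1 - r) * r ^ m) • x m + discountedSum r y x (m + 1) n‖ := norm_sub_le_norm_add _ _
    _ = ‖discountedSum r y x m n‖ := by rw [← discountedSum_eq_smul_add r y x hmn]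

theorem stmt3_general (hr : 0 < r) (hmn : m < n) (ha : 0 < a) (hy : ‖y‖ ≤ b)
    (hx : ∀ k, m < k → k < n → ‖x k‖ ≤ b) (hm : a ≤ ‖x m‖) (hrab : r < a / (b + a)) :
    0 < ‖discountedSum r y x m n‖ := by
  have hb : 0 ≤ b := (norm_nonneg y).trans hy
  have hr₁ : r ≤ 1 := hrab.le.trans (div_le_one_of_le₀ (by linarith) (by positivity))
  have h_gap : 0 < (1 - r) * a - r * b := by
    rw [lt_div_iff₀ (by positivity)] at hrab
    linarith
  exact (mul_pos (pow_pos hr m) h_gap).trans_le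
    (pow_mul_sub_le_norm_discountedSum hr.le hr₁ hmn hy hx hm)

end Norm

/-- Existence of a contraction-parameter witness: under the bounds
`‖Δw‖ ≤ 2√2`, `‖Δ k‖ ≤ 2√2` for `i+1 ≤ k ≤ w−1`, `‖Δ i‖ ≥ 2s` with `s > 0`, if
`λ < s/(√2 + s)` then `μ = λ^w Δ_w + (1−λ)λ^i Δ_i + (1−λ) Σ_{k=i+1}^{w−1} λ^k Δ_k`
is nonzero (equivalently `‖μ‖ > 0`). -/
theorem stmt3 {E : Type*} [NormedAddCommGroup E] [NormedSpace ℝ E]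
    (lam : ℝ) (hlam0 : 0 < lam) (hlam1 : lam < 1)
    (w i : ℕ) (hw : 1 ≤ w) (hi : i ≤ w - 1)
    (s : ℝ) (hs : 0 < s)
    (Δw : E) (Δ : ℕ → E)
    (hΔw : ‖Δw‖ ≤ 2 * Real.sqrt 2)
    (hΔk : ∀ k, i + 1 ≤ k → k ≤ w - 1 → ‖Δ k‖ ≤ 2 * Real.sqrt 2)
    (hΔi : 2 * s ≤ ‖Δ i‖)
    (hlams : lam < s / (Real.sqrt 2 + s))
    (μ : E)
    (hμ : μ = lam ^ w • Δw + ((1 - lam) * lam ^ i) • Δ i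
      + (1 - lam) • ∑ k ∈ Finset.Icc (i + 1) (w - 1), lam ^ k • Δ k) :
    0 < ‖μ‖ ∧ μ ≠ 0 := by
  have hiw : i < w := by omega
  have hlam : lam < 2 * s / (2 * Real.sqrt 2 + 2 * s) := by
    rwa [← mul_add, mul_div_mul_left _ _ two_ne_zero]
  have hpos : 0 < ‖μ‖ := by
    rw [hμ, ← discountedSum_eq_add_smul_sum_Icc lam Δw Δ hiw]
    exact stmt3_general hlam0 hiw (by positivity) hΔw
      (fun k hik hkw ↦ hΔk k hik (Nat.le_sub_one_of_lt hkw)) hΔi hlam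
  exact ⟨hpos, norm_pos_iff.1 hpos⟩
end

section
/- Assume the Gram matrix K is positive definite and y ≠ 0, and set Λ* := √(yᵀ K⁻¹ y) > 0. Then for every Λ with 0 ≤ Λ ≤ Λ*, there exists h ∈ H with ‖h‖ ≤ Λ such that (1/N)·Σ_{j=1}^N (⟨h, φ_j⟩ − y_j)² = (1 − Λ/Λ*)²·(1/N)·Σ_{j=1}^N y_j². In particular, the infimum of the empirical squared risk (1/N)·Σ_j (⟨h, φ_j⟩ − y_j)² over the ball {h ∈ H : ‖h‖ ≤ Λ} is at most (1 − Λ/Λ*)²·(1/N)·Σ_j y_j². -/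
open Matrix
open scoped RealInnerProductSpace

/-!
Any solution `c` of `K c = y` yields an interpolant `g = ∑ i, c i • φ i`, since
`⟪φ j, g⟫ = (K c) j = y j`, and `‖g‖² = c⋆ K c = c⋆ y`; for invertible `K` this makes `‖g‖ = Λ*`.
Shrinking the interpolant to `t • g` multiplies every residual of the zero predictor by `1 - t`,
and `t = Λ / Λ*` uses up exactly the norm budget `Λ`.
-/

lemma mulVec_inv_mulVec_of_isUnit {n R : Type*} [Fintype n] [DecidableEq n] [CommRing R]
    {A : Matrix n n R} (hA : IsUnit A) (v : n → R) : A *ᵥ A⁻¹ *ᵥ v = v := by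
  rw [mulVec_mulVec, mul_nonsing_inv _ ((isUnit_iff_isUnit_det A).mp hA), one_mulVec]

section EffectiveLearning

open scoped InnerProductSpace

variable {𝕜 E ι : Type*} [RCLike 𝕜] [SeminormedAddCommGroup E] [InnerProductSpace 𝕜 E] [Fintype ι]

/-- The mean squared error of the linear predictor `⟪·, h⟫` at the feature vectors `φ j` with labels
`y j`. The predictor is `h ↦ ⟪φ j, h⟫` rather than `h ↦ ⟪h, φ j⟫` so that it is linear in `h` over
`ℂ` too. For empty `ι` the value is `0`. -/
noncomputable def empiricalRisk (φ : ι → E) (y : ι → 𝕜) (h : E) : ℝ :=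
  (1 / Fintype.card ι : ℝ) * ∑ j, ‖⟪φ j, h⟫_𝕜 - y j‖ ^ 2

lemma empiricalRisk_nonneg (φ : ι → E) (y : ι → 𝕜) (h : E) : 0 ≤ empiricalRisk φ y h := by
  unfold empiricalRisk
  positivity

lemma sInf_empiricalRisk_le (φ : ι → E) (y : ι → 𝕜) {h : E} {Λ : ℝ} (hh : ‖h‖ ≤ Λ) :
    sInf {r : ℝ | ∃ h : E, ‖h‖ ≤ Λ ∧ r = empiricalRisk φ y h} ≤ empiricalRisk φ y h := by
  refine csInf_le ⟨0, ?_⟩ ⟨h, hh, rfl⟩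
  rintro _ ⟨h', -, rfl⟩
  exact empiricalRisk_nonneg φ y h'

lemma empiricalRisk_smul_of_inner_eq {φ : ι → E} {y : ι → 𝕜} {g : E} (hg : ∀ j, ⟪φ j, g⟫_𝕜 = y j)
    (t : 𝕜) : empiricalRisk φ y (t • g) = ‖1 - t‖ ^ 2 * empiricalRisk φ y 0 := by
  have residual_smul (j : ι) :
      ‖⟪φ j, t • g⟫_𝕜 - y j‖ ^ 2 = ‖1 - t‖ ^ 2 * ‖⟪φ j, (0 : E)⟫_𝕜 - y j‖ ^ 2 := by
    rw [inner_smul_right, hg, inner_zero_right, ← mul_pow, ← norm_mul]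
    congr 2
    ring
  simp only [empiricalRisk, residual_smul, ← Finset.mul_sum]
  ring

lemma inner_sum_smul_eq_gram_mulVec (φ : ι → E) (c : ι → 𝕜) (j : ι) :
    ⟪φ j, ∑ i, c i • φ i⟫_𝕜 = (gram 𝕜 φ *ᵥ c) j := by
  simp only [inner_sum, inner_smul_right, mulVec, dotProduct, gram_apply, mul_comm]

lemma norm_sum_smul_eq_sqrt_re_gram (φ : ι → E) (c : ι → 𝕜) :
    ‖∑ i, c i • φ i‖ = √(RCLike.re (star c ⬝ᵥ gram 𝕜 φ *ᵥ c)) := by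
  rw [star_dotProduct_gram_mulVec, norm_eq_sqrt_re_inner (𝕜 := 𝕜)]

lemma norm_pos_of_inner_ne_zero {x g : E} (h : ⟪x, g⟫_𝕜 ≠ 0) : 0 < ‖g‖ :=
  (norm_nonneg g).lt_of_ne' fun hg ↦ h (inner_eq_zero_of_right x hg)

theorem stmt7_general (φ : ι → E) {c y : ι → 𝕜} (hc : gram 𝕜 φ *ᵥ c = y) (hy : y ≠ 0)
    {Λstar : ℝ} (hΛstar : Λstar = √(RCLike.re (star c ⬝ᵥ y))) :
    0 < Λstar ∧
    ∀ Λ : ℝ, 0 ≤ Λ →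
      (∃ h : E, ‖h‖ ≤ Λ ∧
        empiricalRisk φ y h = (1 - Λ / Λstar) ^ 2 * empiricalRisk φ y 0) ∧
      sInf {r : ℝ | ∃ h : E, ‖h‖ ≤ Λ ∧ r = empiricalRisk φ y h}
        ≤ (1 - Λ / Λstar) ^ 2 * empiricalRisk φ y 0 := by
  set g : E := ∑ i, c i • φ i
  have inner_g (j : ι) : ⟪φ j, g⟫_𝕜 = y j := by rw [inner_sum_smul_eq_gram_mulVec, hc]
  have norm_g : ‖g‖ = Λstar := by rw [norm_sum_smul_eq_sqrt_re_gram, hc, hΛstar]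
  have Λstar_pos : 0 < Λstar := by
    obtain ⟨j, hj⟩ := Function.ne_iff.mp hy
    exact norm_g ▸ norm_pos_of_inner_ne_zero ((inner_g j).trans_ne hj)
  refine ⟨Λstar_pos, fun Λ hΛ ↦ ?_⟩
  have norm_smul_g : ‖((Λ / Λstar : ℝ) : 𝕜) • g‖ ≤ Λ := by
    rw [norm_smul, RCLike.norm_of_nonneg (by positivity), norm_g, div_mul_cancel₀ _ Λstar_pos.ne']
  have risk_smul_g : empiricalRisk φ y (((Λ / Λstar : ℝ) : 𝕜) • g)
      = (1 - Λ / Λstar) ^ 2 * empiricalRisk φ y 0 := by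
    rw [empiricalRisk_smul_of_inner_eq inner_g, ← RCLike.ofReal_one, ← RCLike.ofReal_sub,
      RCLike.norm_ofReal, sq_abs]
  exact ⟨⟨_, norm_smul_g, risk_smul_g⟩, risk_smul_g ▸ sInf_empiricalRisk_le φ y norm_smul_g⟩

end EffectiveLearning

/-- Effective learning: if the Gram matrix `K i j = ⟪φ i, φ j⟫` is
positive definite and `y ≠ 0`, then `Λ* = √(yᵀ K⁻¹ y) > 0` and for every
`0 ≤ Λ ≤ Λ*` there exists `h` in the ball of radius `Λ` whose empirical squared risk
equals `(1 − Λ/Λ*)²·(1/N)·Σ_j y_j²`; in particular the infimum of the empirical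
squared risk over the ball is at most that value. -/
theorem stmt7 {H : Type*} [NormedAddCommGroup H] [InnerProductSpace ℝ H]
    (N : ℕ) (hN : 1 ≤ N) (φ : Fin N → H)
    (K : Matrix (Fin N) (Fin N) ℝ)
    (hK : ∀ i j, K i j = ⟪φ i, φ j⟫)
    (y : Fin N → ℝ) (hy : y ≠ 0) (hKpd : K.PosDef)
    (Λstar : ℝ) (hΛstar : Λstar = Real.sqrt (y ⬝ᵥ K⁻¹.mulVec y)) :
    0 < Λstar ∧
    ∀ Λ : ℝ, 0 ≤ Λ → Λ ≤ Λstar →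
      (∃ h : H, ‖h‖ ≤ Λ ∧
        (1 / N : ℝ) * ∑ j, (⟪h, φ j⟫ - y j) ^ 2
          = (1 - Λ / Λstar) ^ 2 * ((1 / N : ℝ) * ∑ j, (y j) ^ 2)) ∧
      sInf {r : ℝ | ∃ h : H, ‖h‖ ≤ Λ ∧
          r = (1 / N : ℝ) * ∑ j, (⟪h, φ j⟫ - y j) ^ 2}
        ≤ (1 - Λ / Λstar) ^ 2 * ((1 / N : ℝ) * ∑ j, (y j) ^ 2) := by
  obtain rfl : K = gram ℝ φ := Matrix.ext hK
  obtain ⟨Λstar_pos, budget⟩ := stmt7_general φ (mulVec_inv_mulVec_of_isUnit hKpd.isUnit y) hy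
    (by simpa [dotProduct_comm] using hΛstar)
  exact ⟨Λstar_pos, fun Λ hΛ _ ↦ by simpa [empiricalRisk, real_inner_comm] using budget Λ hΛ⟩
end
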